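/- The function U satisfies, for every (a,b) ∈ ℝ², the nonlinear ordinary differential relation a = U(a,b)·b − U(a,b)³ + 6·U(a,b)·U_a(a,b) − 4·U_aa(a,b), where subscripts denote partial derivatives with respect to a. -/

import Mathlib

noncomputable section

open MeasureTheory

/-- Partial derivative in the first argument of a curried 2-variable function. -/
def qd1 (f : ℝ → ℝ → ℝ) (a b : ℝ) : ℝ := deriv (fun s => f s b) a

/-- The Pearcey weight `exp(-(z⁴ - 2bz² + 4az)/8)`. -/
def pearceyW (a b z : ℝ) : ℝ := Real.exp (-(z ^ 4 - 2 * b * z ^ 2 + 4 * a * z) / 8)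

/-- The Pearcey-type function `U(a,b) = -2 ∂_a log I(a,b)`, which equals
`(∫ z · weight)/(∫ weight)`. -/
def pearceyU (a b : ℝ) : ℝ :=
  (∫ z : ℝ, z * pearceyW a b z) / (∫ z : ℝ, pearceyW a b z)

/-!
For fixed `b`, integrating the total derivative `∂_z (pearceyW a b z)` over the line shows that
`I = ∫ pearceyW` solves the linear equation `8 I''' = 2 b I' + a I` in the variable `a`. The
Cole–Hopf substitution `u = I' / I` turns `I''' / I` into `u'' + 3 u u' + u³`, and `U = -2 u`.
Smoothness in `a` comes for free: `I` is the moment generating function of `z ↦ -z / 2` under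
the measure with density `pearceyW 0 b`, all of whose exponential moments are finite.
-/

open Filter ProbabilityTheory Topology

section LogDeriv

variable {𝕜 𝕜' : Type*} [NontriviallyNormedField 𝕜] [NontriviallyNormedField 𝕜']
  [NormedAlgebra 𝕜 𝕜'] {f g : 𝕜 → 𝕜'} {x : 𝕜}

lemma deriv_eq_mul_logDeriv (hx : f x ≠ 0) : deriv f x = f x * logDeriv f x := by
  rw [logDeriv_apply, mul_div_cancel₀ _ hx]

lemma deriv_mul_eq_mul_logDeriv_mul_add (hf : DifferentiableAt 𝕜 f x) (hx : f x ≠ 0)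
    (hg : DifferentiableAt 𝕜 g x) :
    deriv (f * g) x = f x * (logDeriv f x * g x + deriv g x) := by
  rw [deriv_mul hf hg, deriv_eq_mul_logDeriv hx]
  ring

lemma contDiffAt_logDeriv {n : WithTop ℕ∞} (hf : ContDiffAt 𝕜 (n + 1) f x) (hx : f x ≠ 0) :
    ContDiffAt 𝕜 n (logDeriv f) x := by
  rw [logDeriv, div_eq_mul_inv]
  exact (hf.derivWithin le_rfl).mul ((hf.of_le le_self_add).inv hx)

lemma iteratedDeriv_two_eq_mul_logDeriv (hf : ContDiffAt 𝕜 2 f x) (hx : f x ≠ 0) :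
    iteratedDeriv 2 f x = f x * (logDeriv f x ^ 2 + deriv (logDeriv f) x) := by
  have hfirst : deriv f =ᶠ[𝓝 x] f * logDeriv f :=
    (hf.continuousAt.eventually_ne hx).mono fun _ hy => deriv_eq_mul_logDeriv hy
  have hu : ContDiffAt 𝕜 1 (logDeriv f) x := contDiffAt_logDeriv hf hx
  rw [iteratedDeriv_succ, iteratedDeriv_one, hfirst.deriv_eq,
    deriv_mul_eq_mul_logDeriv_mul_add (hf.differentiableAt two_ne_zero) hx
      (hu.differentiableAt one_ne_zero), sq]

lemma iteratedDeriv_three_eq_mul_logDeriv (hf : ContDiffAt 𝕜 3 f x) (hx : f x ≠ 0) :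
    iteratedDeriv 3 f x = f x * (iteratedDeriv 2 (logDeriv f) x
      + 3 * logDeriv f x * deriv (logDeriv f) x + logDeriv f x ^ 3) := by
  set u := logDeriv f with hu_def
  have hsecond : iteratedDeriv 2 f =ᶠ[𝓝 x] f * (u ^ 2 + deriv u) := by
    filter_upwards [hf.eventually (by simp), hf.continuousAt.eventually_ne hx] with y hfy hy
    exact iteratedDeriv_two_eq_mul_logDeriv (hfy.of_le (by norm_num)) hy
  have hu : ContDiffAt 𝕜 2 u x := contDiffAt_logDeriv hf hx
  have hdu : DifferentiableAt 𝕜 u x := hu.differentiableAt two_ne_zero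
  have hddu : DifferentiableAt 𝕜 (deriv u) x :=
    (hu.derivWithin (m := 1) le_rfl).differentiableAt one_ne_zero
  calc iteratedDeriv 3 f x = deriv (f * (u ^ 2 + deriv u)) x := by
        rw [iteratedDeriv_succ, hsecond.deriv_eq]
    _ = f x * (u x * (u x ^ 2 + deriv u x) + (2 * u x * deriv u x + iteratedDeriv 2 u x)) := by
        rw [deriv_mul_eq_mul_logDeriv_mul_add (hf.differentiableAt three_ne_zero) hx
          ((hdu.pow 2).add hddu), deriv_add (hdu.pow 2) hddu, deriv_pow hdu, iteratedDeriv_succ,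
          iteratedDeriv_one]
        simp [hu_def]
    _ = _ := by ring

end LogDeriv

section WithDensity

variable {α : Type*} [MeasurableSpace α] {μ : Measure α} {E : Type*}
  [NormedAddCommGroup E] [NormedSpace ℝ E] {w : α → ℝ}

lemma integrable_withDensity_ofReal_iff (hw : AEMeasurable w μ) (hw0 : 0 ≤ w) {g : α → E} :
    Integrable g (μ.withDensity fun x => ENNReal.ofReal (w x)) ↔
      Integrable (fun x => w x • g x) μ := by
  rw [integrable_withDensity_iff_integrable_smul₀' hw.ennreal_ofReal (by simp)]
  simp only [ENNReal.toReal_ofReal (hw0 _)]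

lemma integral_withDensity_ofReal (hw : AEMeasurable w μ) (hw0 : 0 ≤ w) (g : α → E) :
    ∫ x, g x ∂(μ.withDensity fun x => ENNReal.ofReal (w x)) = ∫ x, w x • g x ∂μ := by
  rw [integral_withDensity_eq_integral_toReal_smul₀ hw.ennreal_ofReal (by simp)]
  simp only [ENNReal.toReal_ofReal (hw0 _)]

end WithDensity

/-- The Pearcey integral `I(a,b)`, with logarithmic derivative `-U(a,b) / 2` in `a`. -/
def pearceyI (a b : ℝ) : ℝ := ∫ z, pearceyW a b z

/-- The measure on the line with density `pearceyW 0 b`. Tilting it by `exp (-a * z / 2)` gives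
the measure with density `pearceyW a b`, so `pearceyI` is a moment generating function of it. -/
def pearceyMeasure (b : ℝ) : Measure ℝ :=
  volume.withDensity fun z => ENNReal.ofReal (pearceyW 0 b z)

section Weight

variable (a b : ℝ)

lemma pearceyW_nonneg : 0 ≤ pearceyW a b := fun _ => (Real.exp_pos _).le

lemma continuous_pearceyW : Continuous (pearceyW a b) := by
  unfold pearceyW
  fun_prop

lemma pearceyW_zero_mul_exp (z : ℝ) :
    pearceyW 0 b z * Real.exp (a * (-z / 2)) = pearceyW a b z := by
  rw [pearceyW, pearceyW, ← Real.exp_add]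
  ring_nf

lemma hasDerivAt_pearceyW (z : ℝ) :
    HasDerivAt (pearceyW a b) (-(z ^ 3 - b * z + a) / 2 * pearceyW a b z) z := by
  have hexponent : HasDerivAt (fun y : ℝ => -(y ^ 4 - 2 * b * y ^ 2 + 4 * a * y) / 8)
      (-(4 * z ^ 3 - 2 * b * (2 * z) + 4 * a) / 8) z := by
    simpa using ((((hasDerivAt_pow 4 z).sub ((hasDerivAt_pow 2 z).const_mul (2 * b))).add
      ((hasDerivAt_id z).const_mul (4 * a))).neg).div_const 8
  refine hexponent.exp.congr_deriv ?_
  rw [pearceyW]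
  ring

lemma pearceyW_le_gaussian (z : ℝ) :
    pearceyW a b z ≤ Real.exp (((b + 9 / 2) ^ 2 + 4 * a ^ 2) / 8) * Real.exp (-1 * z ^ 2) := by
  rw [pearceyW, ← Real.exp_add, Real.exp_le_exp]
  linarith [sq_nonneg (z ^ 2 - (b + 9 / 2)), sq_nonneg (z + 2 * a)]

lemma integrable_pearceyW : Integrable (pearceyW a b) := by
  have hbound (z : ℝ) : ‖pearceyW a b z‖ ≤ _ :=
    (Real.norm_of_nonneg (pearceyW_nonneg a b z)).trans_le (pearceyW_le_gaussian a b z)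
  exact ((integrable_exp_neg_mul_sq one_pos).const_mul _).mono'
    (continuous_pearceyW a b).aestronglyMeasurable (.of_forall hbound)

lemma pearceyI_pos : 0 < pearceyI a b := integral_exp_pos (integrable_pearceyW a b)

end Weight

section MomentGeneratingFunction

variable (a b : ℝ)

lemma integrable_pearceyMeasure_iff {g : ℝ → ℝ} :
    Integrable g (pearceyMeasure b) ↔ Integrable fun z => pearceyW 0 b z * g z :=
  integrable_withDensity_ofReal_iff (continuous_pearceyW 0 b).aemeasurable (pearceyW_nonneg 0 b)

lemma integral_pearceyMeasure (g : ℝ → ℝ) :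
    ∫ z, g z ∂pearceyMeasure b = ∫ z, pearceyW 0 b z * g z :=
  integral_withDensity_ofReal (continuous_pearceyW 0 b).aemeasurable (pearceyW_nonneg 0 b) g

lemma mgf_pearceyMeasure : mgf (fun z => -z / 2) (pearceyMeasure b) = (pearceyI · b) := by
  ext s
  simp only [mgf, integral_pearceyMeasure, pearceyW_zero_mul_exp, pearceyI]

lemma integrableExpSet_pearceyMeasure :
    integrableExpSet (fun z => -z / 2) (pearceyMeasure b) = Set.univ := by
  refine Set.eq_univ_of_forall fun s => (integrable_pearceyMeasure_iff b).2 ?_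
  simpa only [pearceyW_zero_mul_exp] using integrable_pearceyW s b

lemma mem_interior_integrableExpSet_pearceyMeasure :
    a ∈ interior (integrableExpSet (fun z => -z / 2) (pearceyMeasure b)) := by
  simp [integrableExpSet_pearceyMeasure]

lemma pearceyW_zero_mul_pow_mul_exp (n : ℕ) (z : ℝ) :
    pearceyW 0 b z * ((-z / 2) ^ n * Real.exp (a * (-z / 2))) = (-z / 2) ^ n * pearceyW a b z := by
  rw [mul_left_comm, pearceyW_zero_mul_exp]

lemma integrable_pow_mul_pearceyW (n : ℕ) :
    Integrable fun z => (-z / 2) ^ n * pearceyW a b z := by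
  simpa only [integrable_pearceyMeasure_iff, pearceyW_zero_mul_pow_mul_exp] using
    integrable_pow_mul_exp_of_mem_interior_integrableExpSet
      (mem_interior_integrableExpSet_pearceyMeasure a b) n

lemma contDiffAt_pearceyI {n : WithTop ℕ∞} : ContDiffAt ℝ n (pearceyI · b) a := by
  rw [← mgf_pearceyMeasure]
  exact (analyticAt_mgf (mem_interior_integrableExpSet_pearceyMeasure a b)).contDiffAt

lemma iteratedDeriv_pearceyI (n : ℕ) :
    iteratedDeriv n (pearceyI · b) a = ∫ z, (-z / 2) ^ n * pearceyW a b z := by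
  rw [← mgf_pearceyMeasure, iteratedDeriv_mgf (mem_interior_integrableExpSet_pearceyMeasure a b)]
  simp only [integral_pearceyMeasure, pearceyW_zero_mul_pow_mul_exp]

lemma deriv_pearceyI : deriv (pearceyI · b) a = ∫ z, -z / 2 * pearceyW a b z := by
  simpa only [iteratedDeriv_one, pow_one] using iteratedDeriv_pearceyI a b 1

end MomentGeneratingFunction

section DifferentialEquations

variable (a b : ℝ)

theorem pearceyI_linear_ode :
    8 * iteratedDeriv 3 (pearceyI · b) a
      = 2 * b * deriv (pearceyI · b) a + a * pearceyI a b := by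
  have hcubic := (integrable_pow_mul_pearceyW a b 3).const_mul 4
  have hlinear : Integrable fun z => b * (-z / 2 * pearceyW a b z) := by
    simpa only [pow_one] using (integrable_pow_mul_pearceyW a b 1).const_mul b
  have hdiff : Integrable fun z =>
      4 * ((-z / 2) ^ 3 * pearceyW a b z) - b * (-z / 2 * pearceyW a b z) := hcubic.sub hlinear
  have hconst := (integrable_pearceyW a b).const_mul (a / 2)
  have htotal : ∫ z, (4 * ((-z / 2) ^ 3 * pearceyW a b z) - b * (-z / 2 * pearceyW a b z)
      - a / 2 * pearceyW a b z) = 0 := by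
    refine integral_eq_zero_of_hasDerivAt_of_integrable (fun z => ?_) (hdiff.sub hconst)
      (integrable_pearceyW a b)
    exact (hasDerivAt_pearceyW a b z).congr_deriv (by ring)
  rw [integral_sub hdiff hconst, integral_sub hcubic hlinear] at htotal
  simp only [integral_const_mul, ← iteratedDeriv_pearceyI, ← deriv_pearceyI] at htotal
  rw [← pearceyI] at htotal
  linarith

theorem logDeriv_pearceyI_ode :
    8 * (iteratedDeriv 2 (logDeriv (pearceyI · b)) a
        + 3 * logDeriv (pearceyI · b) a * deriv (logDeriv (pearceyI · b)) a
        + logDeriv (pearceyI · b) a ^ 3)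
      = 2 * b * logDeriv (pearceyI · b) a + a := by
  have hI : pearceyI a b ≠ 0 := (pearceyI_pos a b).ne'
  have hlinear := pearceyI_linear_ode a b
  rw [iteratedDeriv_three_eq_mul_logDeriv (contDiffAt_pearceyI a b) hI,
    deriv_eq_mul_logDeriv (f := (pearceyI · b)) hI] at hlinear
  refine mul_left_cancel₀ hI ?_
  linear_combination hlinear

lemma pearceyU_eq_logDeriv : pearceyU a b = -2 * logDeriv (pearceyI · b) a := by
  have hmoment : ∫ z, z * pearceyW a b z = -2 * deriv (pearceyI · b) a := by
    rw [deriv_pearceyI, ← integral_const_mul]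
    ring_nf
  rw [pearceyU, hmoment, logDeriv_apply, mul_div_assoc, pearceyI]

lemma qd1_pearceyU : qd1 pearceyU a b = -2 * deriv (logDeriv (pearceyI · b)) a := by
  simp only [qd1, pearceyU_eq_logDeriv, deriv_const_mul_field]

lemma qd1_qd1_pearceyU :
    qd1 (qd1 pearceyU) a b = -2 * iteratedDeriv 2 (logDeriv (pearceyI · b)) a := by
  rw [qd1]
  simp only [qd1_pearceyU, deriv_const_mul_field, iteratedDeriv_succ, iteratedDeriv_zero]

end DifferentialEquations

/-- The Pearcey-type function `U` satisfies the nonlinear ODE relation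
`a = U b - U³ + 6 U U_a - 4 U_aa` at every point of ℝ². -/
theorem pearceyU_nonlinear_ode (a b : ℝ) :
    a = pearceyU a b * b - (pearceyU a b) ^ 3
        + 6 * pearceyU a b * qd1 pearceyU a b
        - 4 * qd1 (qd1 pearceyU) a b := by
  have hu := logDeriv_pearceyI_ode a b
  rw [qd1_qd1_pearceyU, qd1_pearceyU, pearceyU_eq_logDeriv]
  linear_combination -hu
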